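/- Let γ:[0,1]→ℝ² be absolutely continuous with constant speed ‖γ'(t)‖ = L(γ) > 0 for almost every t and ∫₀¹ Λ*(γ'(t)) dt < ∞. Then there exists a constant c>0 (depending on γ) such that for every ε>0 and every absolutely continuous φ:[0,1]→ℝ² with ∫₀¹ Λ*(φ'(t)) dt < ∞ and L(φ) ≥ L(γ)+ε, one has ∫₀¹ Λ*(φ'(t)) dt − ∫₀¹ Λ*(γ'(t)) dt ≥ cε. -/

import Mathlib

open MeasureTheory Set Filter Topology
open scoped ENNReal RealInnerProductSpace

noncomputable section

/-- The Euclidean plane. -/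
abbrev E2 := EuclideanSpace ℝ (Fin 2)

/-- The uniform probability measure on a set `A` (normalized Lebesgue measure). -/
def uniformOn {α : Type*} [MeasureSpace α] (A : Set α) : Measure α :=
  (volume A)⁻¹ • volume.restrict A

/-- The logarithmic moment generating function `Λ` of the uniform probability measure on the
open disk of radius `R` centered at the origin. -/
def logMGF (R : ℝ) (η : E2) : ℝ :=
  Real.log (∫ x, Real.exp (⟪x, η⟫) ∂(uniformOn (Metric.ball (0 : E2) R)))

/-- The Fenchel–Legendre transform `Λ*` of `logMGF R`, valued in `[0,∞]`.  Since the supremum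
includes `η = 0` (where the value is `0`), truncating negative values does not change it. -/
def lambdaStar (R : ℝ) (y : E2) : ℝ≥0∞ :=
  ⨆ η : E2, ENNReal.ofReal (⟪y, η⟫ - logMGF R η)

/-- A linear isometry preserves the uniform measure on a centered ball. -/
lemma measurePreserving_uniformOn_ball (R : ℝ) (T : E2 ≃ₗᵢ[ℝ] E2) :
    MeasurePreserving T (uniformOn (Metric.ball (0 : E2) R))
      (uniformOn (Metric.ball (0 : E2) R)) := by
  have h := T.measurePreserving.restrict_preimage (s := Metric.ball (0 : E2) R)
    measurableSet_ball
  have hpre : T ⁻¹' Metric.ball (0 : E2) R = Metric.ball 0 R := by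
    ext x
    simp
  rw [hpre] at h
  exact h.smul_measure _

lemma isProbabilityMeasure_uniformOn_ball {R : ℝ} (hR : 0 < R) :
    IsProbabilityMeasure (uniformOn (Metric.ball (0 : E2) R)) :=
  ProbabilityTheory.cond_isProbabilityMeasure_of_finite
    (Metric.measure_ball_pos volume 0 hR).ne' measure_ball_lt_top.ne

lemma logMGF_map (R : ℝ) (T : E2 ≃ₗᵢ[ℝ] E2) (η : E2) : logMGF R (T η) = logMGF R η := by
  unfold logMGF
  rw [← (measurePreserving_uniformOn_ball R T).integral_comp
    T.toHomeomorph.measurableEmbedding (fun x => Real.exp ⟪x, T η⟫)]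
  simp

lemma logMGF_eq_of_norm_eq (R : ℝ) {η ζ : E2} (h : ‖η‖ = ‖ζ‖) : logMGF R η = logMGF R ζ := by
  rw [← Submodule.reflection_sub h, logMGF_map]

lemma logMGF_zero {R : ℝ} (hR : 0 < R) : logMGF R 0 = 0 := by
  have := isProbabilityMeasure_uniformOn_ball hR
  simp [logMGF]

lemma logMGF_smul (R : ℝ) (e : E2) (s : ℝ) :
    logMGF R (s • e) =
      Real.log (ProbabilityTheory.mgf (fun x => ⟪x, e⟫) (uniformOn (Metric.ball 0 R)) s) := by
  simp [logMGF, ProbabilityTheory.mgf, inner_smul_right]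

/-- The marginals of the uniform measure on a centered disk are sub-Gaussian. -/
lemma exists_hasSubgaussianMGF_uniformOn_ball {R : ℝ} (hR : 0 < R) (e : E2) :
    ∃ c, ProbabilityTheory.HasSubgaussianMGF (fun x => ⟪x, e⟫) c
      (uniformOn (Metric.ball (0 : E2) R)) := by
  have := isProbabilityMeasure_uniformOn_ball hR
  refine ⟨_, ProbabilityTheory.hasSubgaussianMGF_of_mem_Icc_of_integral_eq_zero
    (a := -(R * ‖e‖)) (b := R * ‖e‖) (by fun_prop) ?_ ?_⟩
  · refine Measure.ae_smul_measure ?_ _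
    filter_upwards [ae_restrict_mem measurableSet_ball] with x hx
    have hx' : ‖x‖ < R := by simpa using hx
    exact abs_le.1 ((abs_real_inner_le_norm x e).trans (by gcongr))
  · have h := (measurePreserving_uniformOn_ball R (LinearIsometryEquiv.neg ℝ)).integral_comp
      (LinearIsometryEquiv.neg ℝ).toHomeomorph.measurableEmbedding (fun x => ⟪x, e⟫)
    simp only [LinearIsometryEquiv.coe_neg, inner_neg_left, integral_neg] at h
    linarith

lemma continuous_logMGF_smul {R : ℝ} (hR : 0 < R) (e : E2) :
    Continuous fun s : ℝ => logMGF R (s • e) := by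
  have := isProbabilityMeasure_uniformOn_ball hR
  obtain ⟨c, hc⟩ := exists_hasSubgaussianMGF_uniformOn_ball hR e
  simp only [logMGF_smul]
  exact (ProbabilityTheory.continuous_mgf hc.integrable_exp_mul).log fun s =>
    (ProbabilityTheory.mgf_pos (hc.integrable_exp_mul s)).ne'

lemma exists_logMGF_smul_lt {R : ℝ} (hR : 0 < R) (e : E2) {r : ℝ} (hr : 0 < r) :
    ∃ s > 0, logMGF R (s • e) < r * s := by
  have := isProbabilityMeasure_uniformOn_ball hR
  obtain ⟨c, hc⟩ := exists_hasSubgaussianMGF_uniformOn_ball hR e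
  have hc0 : (0 : ℝ) ≤ c := c.2
  refine ⟨r / (c + 1), by positivity, ?_⟩
  rw [logMGF_smul]
  refine (Real.log_le_log (ProbabilityTheory.mgf_pos (hc.integrable_exp_mul _))
    (hc.mgf_le _)).trans_lt ?_
  rw [Real.log_exp]
  have h : r * (r / (c + 1)) - c * (r / (c + 1)) ^ 2 / 2 =
      r ^ 2 * (c / 2 + 1) / (c + 1) ^ 2 := by
    field_simp
    ring
  have : 0 < r ^ 2 * (c / 2 + 1) / ((c : ℝ) + 1) ^ 2 := by positivity
  linarith

lemma ofReal_le_lambdaStar (R : ℝ) {e : E2} (he : ‖e‖ = 1) (y : E2) {s : ℝ} :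
    ENNReal.ofReal (‖y‖ * s - logMGF R (s • e)) ≤ lambdaStar R y := by
  obtain ⟨u, hu, hyu⟩ : ∃ u : E2, ‖u‖ = 1 ∧ ⟪y, u⟫ = ‖y‖ := by
    rcases eq_or_ne y 0 with rfl | hy
    · exact ⟨e, he, by simp⟩
    · have hy' : ‖y‖ ≠ 0 := norm_ne_zero_iff.2 hy
      refine ⟨‖y‖⁻¹ • y, by simp [norm_smul, hy'], ?_⟩
      rw [inner_smul_right, real_inner_self_eq_norm_sq]
      field_simp
  refine le_trans (le_of_eq ?_) (le_iSup _ (s • u))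
  rw [logMGF_eq_of_norm_eq R (show ‖s • u‖ = ‖s • e‖ by simp [norm_smul, hu, he]),
    inner_smul_right, hyu, mul_comm]

lemma lambdaStar_le {R : ℝ} {e : E2} (he : ‖e‖ = 1) {y : E2} {C : ℝ≥0∞}
    (h : ∀ s : ℝ, 0 ≤ s → ENNReal.ofReal (‖y‖ * s - logMGF R (s • e)) ≤ C) :
    lambdaStar R y ≤ C := by
  refine iSup_le fun η => le_trans (ENNReal.ofReal_le_ofReal ?_) (h ‖η‖ (norm_nonneg _))
  rw [logMGF_eq_of_norm_eq R (show ‖η‖ = ‖‖η‖ • e‖ by simp [norm_smul, he])]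
  gcongr
  exact real_inner_le_norm y η

lemma measurable_lambdaStar (R : ℝ) : Measurable (lambdaStar R) :=
  (lowerSemicontinuous_iSup fun _ =>
    (ENNReal.continuous_ofReal.comp (by fun_prop)).lowerSemicontinuous).measurable

/-- If `Λ*` is finite at some vector strictly longer than `r > 0`, then the supremum defining `Λ*`
on the circle of radius `r` is attained at a vector of positive length `s`. -/
lemma exists_lambdaStar_le {R : ℝ} (hR : 0 < R) {e : E2} (he : ‖e‖ = 1) {r : ℝ} (hr : 0 < r)
    {z : E2} (hz : r < ‖z‖) (hfin : lambdaStar R z < ⊤) :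
    ∃ s > 0, 0 ≤ r * s - logMGF R (s • e) ∧
      ∀ y : E2, ‖y‖ = r → lambdaStar R y ≤ ENNReal.ofReal (r * s - logMGF R (s • e)) := by
  obtain ⟨s₁, hs₁, hlt⟩ := exists_logMGF_smul_lt hR e hr
  set C := (lambdaStar R z).toReal
  set S := C / (‖z‖ - r) with hS
  have hcont : Continuous fun s : ℝ => r * s - logMGF R (s • e) := by
    have := continuous_logMGF_smul hR e
    fun_prop
  have htail : ∀ s, S ≤ s → r * s - logMGF R (s • e) ≤ 0 := fun s hs => by
    have h := ENNReal.ofReal_le_iff_le_toReal hfin.ne |>.1 (ofReal_le_lambdaStar R he z (s := s))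
    rw [hS, div_le_iff₀ (by linarith)] at hs
    linarith
  obtain ⟨s₀, ⟨hs₀, -⟩, hmax⟩ := (isCompact_Icc (a := (0 : ℝ)) (b := max S s₁)).exists_isMaxOn
    ⟨0, by simp [hs₁.le]⟩ hcont.continuousOn
  have hmax₁ : r * s₁ - logMGF R (s₁ • e) ≤ r * s₀ - logMGF R (s₀ • e) :=
    hmax ⟨hs₁.le, le_max_right _ _⟩
  refine ⟨s₀, hs₀.lt_of_ne ?_, by linarith, fun y hy => lambdaStar_le he fun s hs => ?_⟩
  · rintro rfl
    simp only [zero_smul, logMGF_zero hR] at hmax₁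
    linarith
  · rw [hy]
    refine ENNReal.ofReal_le_ofReal ?_
    rcases le_total s (max S s₁) with h | h
    · exact hmax ⟨hs, h⟩
    · exact (htail s ((le_max_left _ _).trans h)).trans (by linarith)

lemma ofReal_integral_le_lintegral_ofReal {α : Type*} [MeasurableSpace α] {μ : Measure α}
    {f : α → ℝ} (hf : Integrable f μ) :
    ENNReal.ofReal (∫ x, f x ∂μ) ≤ ∫⁻ x, ENNReal.ofReal (f x) ∂μ := by
  calc ENNReal.ofReal (∫ x, f x ∂μ) ≤ ENNReal.ofReal (∫ x, max (f x) 0 ∂μ) :=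
        ENNReal.ofReal_le_ofReal (integral_mono hf hf.pos_part fun x => le_max_left _ _)
    _ = ∫⁻ x, ENNReal.ofReal (f x) ∂μ := by
        rw [ofReal_integral_eq_lintegral_ofReal hf.pos_part
          (Eventually.of_forall fun x => le_max_right _ _)]
        simp

/-- The length of an absolutely continuous path is at most the integral of its speed. -/
lemma eVariationOn_le_ofReal_integral_norm {E : Type*} [NormedAddCommGroup E] [NormedSpace ℝ E]
    {φ g : ℝ → E} (hg : IntegrableOn g (Icc 0 1))
    (hφ : ∀ t ∈ Icc (0 : ℝ) 1, φ t = φ 0 + ∫ s in (0 : ℝ)..t, g s) :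
    eVariationOn φ (Icc 0 1) ≤ ENNReal.ofReal (∫ t in Icc (0 : ℝ) 1, ‖g t‖) := by
  have hint : ∀ a ∈ Icc (0 : ℝ) 1, ∀ b ∈ Icc (0 : ℝ) 1, IntervalIntegrable g volume a b :=
    fun a ha b hb => (hg.mono_set (uIcc_subset_Icc ha hb)).intervalIntegrable
  set h : ℝ → ℝ := fun t => ∫ s in (0 : ℝ)..t, ‖g s‖
  have h0 : (0 : ℝ) ∈ Icc (0 : ℝ) 1 := by simp
  have h1 : (1 : ℝ) ∈ Icc (0 : ℝ) 1 := by simp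
  have hsub : ∀ a ∈ Icc (0 : ℝ) 1, ∀ b ∈ Icc (0 : ℝ) 1, h b - h a = ∫ s in a..b, ‖g s‖ :=
    fun a ha b hb => intervalIntegral.integral_interval_sub_left
      (hint 0 h0 b hb).norm (hint 0 h0 a ha).norm
  have hmono : MonotoneOn h (Icc 0 1) := fun a ha b hb hab => by
    rw [← sub_nonneg, hsub a ha b hb]
    exact intervalIntegral.integral_nonneg hab fun _ _ => norm_nonneg _
  have hdist : ∀ a ∈ Icc (0 : ℝ) 1, ∀ b ∈ Icc (0 : ℝ) 1, edist (φ b) (φ a) ≤ edist (h b) (h a) :=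
    fun a ha b hb => by
      rw [edist_dist, edist_dist, dist_eq_norm, Real.dist_eq, hsub a ha b hb, hφ a ha, hφ b hb,
        add_sub_add_left_eq_sub,
        intervalIntegral.integral_interval_sub_left (hint 0 h0 b hb) (hint 0 h0 a ha)]
      exact ENNReal.ofReal_le_ofReal intervalIntegral.norm_integral_le_abs_integral_norm
  calc eVariationOn φ (Icc 0 1) ≤ eVariationOn h (Icc 0 1) := by
        refine iSup_le fun p => (Finset.sum_le_sum fun i _ => ?_).trans
          (eVariationOn.sum_le p.2.2.1 p.2.2.2)
        exact hdist _ (p.2.2.2 i) _ (p.2.2.2 (i + 1))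
    _ ≤ ENNReal.ofReal (h 1 - h 0) := by
        simpa using (hmono.eVariationOn_eq h0 h1).le
    _ = ENNReal.ofReal (∫ t in Icc (0 : ℝ) 1, ‖g t‖) := by
        rw [hsub 0 h0 1 h1, intervalIntegral.integral_of_le zero_le_one, integral_Icc_eq_integral_Ioc]

/-- If `γ` is a constant speed absolutely continuous path of positive length
with finite rate, then there is `c > 0` such that every absolutely continuous path `φ` of
finite rate with `L(φ) ≥ L(γ) + ε` satisfies `I(φ) − I(γ) ≥ c ε`. -/
theorem statement13 (R : ℝ) (hR : 0 < R) (γ gγ : ℝ → E2)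
    (hintγ : IntegrableOn gγ (Set.Icc 0 1) volume)
    (hACγ : ∀ t ∈ Set.Icc (0:ℝ) 1, γ t = γ 0 + ∫ s in (0:ℝ)..t, gγ s)
    (hfinγ : (∫⁻ t in Set.Icc (0:ℝ) 1, lambdaStar R (gγ t)) < ⊤)
    (hpos : 0 < (eVariationOn γ (Set.Icc 0 1)).toReal)
    (hconst : ∀ᵐ t ∂(volume.restrict (Set.Icc (0:ℝ) 1)),
      ‖gγ t‖ = (eVariationOn γ (Set.Icc 0 1)).toReal) :
    ∃ c > 0, ∀ ε > 0, ∀ φ gφ : ℝ → E2,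
      IntegrableOn gφ (Set.Icc 0 1) volume →
      (∀ t ∈ Set.Icc (0:ℝ) 1, φ t = φ 0 + ∫ s in (0:ℝ)..t, gφ s) →
      (∫⁻ t in Set.Icc (0:ℝ) 1, lambdaStar R (gφ t)) < ⊤ →
      ENNReal.ofReal ((eVariationOn γ (Set.Icc 0 1)).toReal + ε) ≤
        eVariationOn φ (Set.Icc 0 1) →
      (∫⁻ t in Set.Icc (0:ℝ) 1, lambdaStar R (gγ t)) + ENNReal.ofReal (c * ε) ≤
        ∫⁻ t in Set.Icc (0:ℝ) 1, lambdaStar R (gφ t) := by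
  obtain ⟨e, he⟩ : ∃ e : E2, ‖e‖ = 1 := ⟨EuclideanSpace.single 0 1, by simp⟩
  generalize (eVariationOn γ (Set.Icc 0 1)).toReal = ℓ at *
  by_cases hz : ∃ z : E2, ℓ < ‖z‖ ∧ lambdaStar R z < ⊤
  · obtain ⟨z, hz, hzfin⟩ := hz
    obtain ⟨s, hs, hnonneg, hle⟩ := exists_lambdaStar_le hR he hpos hz hzfin
    refine ⟨s, hs, fun ε hε φ gφ hint hAC _ hlen => ?_⟩
    have hL : ℓ + ε ≤ ∫ t in Icc (0 : ℝ) 1, ‖gφ t‖ :=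
      (ENNReal.ofReal_le_ofReal_iff (integral_nonneg fun _ => norm_nonneg _)).1
        (hlen.trans (eVariationOn_le_ofReal_integral_norm hint hAC))
    have hint' : IntegrableOn (fun t => ‖gφ t‖ * s) (Icc 0 1) := hint.norm.mul_const s
    calc (∫⁻ t in Icc (0 : ℝ) 1, lambdaStar R (gγ t)) + ENNReal.ofReal (s * ε)
        ≤ (∫⁻ _ in Icc (0 : ℝ) 1, ENNReal.ofReal (ℓ * s - logMGF R (s • e)))
            + ENNReal.ofReal (s * ε) := by
          gcongr ?_ + _
          exact lintegral_mono_ae (hconst.mono fun t ht => hle _ ht)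
      _ = ENNReal.ofReal (ℓ * s - logMGF R (s • e) + s * ε) := by
          rw [ENNReal.ofReal_add hnonneg (by positivity)]
          simp
      _ ≤ ENNReal.ofReal (∫ t in Icc (0 : ℝ) 1, (‖gφ t‖ * s - logMGF R (s • e))) := by
          refine ENNReal.ofReal_le_ofReal ?_
          rw [integral_sub hint' (integrable_const _), integral_mul_const]
          simp only [integral_const, measureReal_restrict_apply_univ, Real.volume_real_Icc, sub_zero,
            zero_le_one, sup_of_le_left, one_smul]
          nlinarith
      _ ≤ ∫⁻ t in Icc (0 : ℝ) 1, ENNReal.ofReal (‖gφ t‖ * s - logMGF R (s • e)) :=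
          ofReal_integral_le_lintegral_ofReal (hint'.sub (integrable_const _))
      _ ≤ ∫⁻ t in Icc (0 : ℝ) 1, lambdaStar R (gφ t) :=
          lintegral_mono fun t => ofReal_le_lambdaStar R he (gφ t)
  · push Not at hz
    refine ⟨1, one_pos, fun ε hε φ gφ hint hAC hfin hlen => ?_⟩
    have hL : ℓ + ε ≤ ∫ t in Icc (0 : ℝ) 1, ‖gφ t‖ :=
      (ENNReal.ofReal_le_ofReal_iff (integral_nonneg fun _ => norm_nonneg _)).1
        (hlen.trans (eVariationOn_le_ofReal_integral_norm hint hAC))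
    have hae : ∀ᵐ t ∂(volume.restrict (Icc (0 : ℝ) 1)), ‖gφ t‖ ≤ ℓ := by
      filter_upwards [ae_lt_top' ((measurable_lambdaStar R).comp_aemeasurable
        hint.aestronglyMeasurable.aemeasurable) hfin.ne] with t ht
      by_contra! hlt
      exact ht.not_ge (hz _ hlt)
    have hle := integral_mono_ae hint.norm (integrable_const ℓ) hae
    simp only [integral_const, measureReal_restrict_apply_univ, Real.volume_real_Icc, sub_zero,
      zero_le_one, sup_of_le_left, one_smul] at hle
    linarith
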